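/- With piecewise constant averaging (coarse-grained variable defined by the normalized constant vector $Q_1$ on each block of $M$ atoms), the diagonal entry of the memory kernel at time zero satisfies $0 \leq \Theta_{0,0}(0) \leq \frac{2\kappa_1 + 4\kappa_2}{M}$, where $\Theta_{0,0}(0) = \frac{1}{2\pi}\int_0^{2\pi} Q_1^{\intercal}\widehat{\mathcal{A}}Q_2(Q_2^{\intercal}\widehat{\mathcal{A}}Q_2)^{-1}Q_2^{\intercal}\widehat{\mathcal{A}}Q_1 \, d\xi$. -/

import Mathlib

open Matrix Complex Real

noncomputable def A0 (M : ℕ) (κ1 κ2 : ℝ) : Matrix (Fin M) (Fin M) ℂ := fun i j =>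
  if (i : ℤ) = (j : ℤ) then 2 * ((κ1 : ℂ) + κ2)
  else if |(i : ℤ) - (j : ℤ)| = 1 then -(κ1 : ℂ)
  else if |(i : ℤ) - (j : ℤ)| = 2 then -(κ2 : ℂ) else 0

noncomputable def A1 (M : ℕ) (κ1 κ2 : ℝ) : Matrix (Fin M) (Fin M) ℂ := fun i j =>
  if (i : ℕ) = 0 ∧ (j : ℕ) = M - 1 then -(κ1 : ℂ)
  else if ((i : ℕ) = 0 ∧ (j : ℕ) = M - 2) ∨ ((i : ℕ) = 1 ∧ (j : ℕ) = M - 1) then -(κ2 : ℂ)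
  else 0

noncomputable def Ahat (M : ℕ) (κ1 κ2 ξ : ℝ) : Matrix (Fin M) (Fin M) ℂ :=
  A0 M κ1 κ2 + Complex.exp (-(ξ : ℂ) * Complex.I) • A1 M κ1 κ2
    + Complex.exp ((ξ : ℂ) * Complex.I) • (A1 M κ1 κ2)ᵀ

noncomputable def q1 (M : ℕ) : Fin M → ℂ := fun _ => (1 / Real.sqrt M : ℝ)

noncomputable def q1r (M : ℕ) : Fin M → ℝ := fun _ => 1 / Real.sqrt M

noncomputable def q1col (M : ℕ) : Matrix (Fin M) (Fin 1) ℂ := fun _ _ => (1 / Real.sqrt M : ℝ)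

/-! Let `S` be the unitary translation by one atom, with phase `exp (iξ)` across the block boundary,
and `L = (1 - S)ᴴ (1 - S)`. Then `Â(ξ) = κ₁ L + κ₂ (4 L - L²)`, and `L` is positive definite for
`0 < ξ < 2π`, since a fixed vector of `S` is constant and must absorb the phase; hence so is `Â(ξ)`
under the stability conditions. The integrand is the term subtracted from `q₁ᴴ Â(ξ) q₁` in the
Schur complement of the block `Q₂ᴴ Â(ξ) Q₂`, so it lies between `0` and `q₁ᴴ Â(ξ) q₁`. Averaging
over `ξ` kills the phases `exp (±iξ)` and leaves `q₁ᴴ A₀ q₁`, the sum of the entries of `A₀` divided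
by `M`, which is `(2 κ₁ + 4 κ₂) / M`. -/

open scoped ComplexOrder

section MonomialMatrix

variable {n R : Type*} [DecidableEq n]

/-- The generalized permutation matrix whose row `i` has the single entry `w i`, in column `σ i`. -/
def monomialMatrix [Zero R] (σ : Equiv.Perm n) (w : n → R) : Matrix n n R :=
  .of fun i j => if σ i = j then w i else 0

lemma monomialMatrix_apply [Zero R] (σ : Equiv.Perm n) (w : n → R) (i j : n) :
    monomialMatrix σ w i j = if σ i = j then w i else 0 := rfl

lemma monomialMatrix_mulVec [NonUnitalNonAssocSemiring R] [Fintype n] (σ : Equiv.Perm n)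
    (w x : n → R) (i : n) : (monomialMatrix σ w *ᵥ x) i = w i * x (σ i) := by
  simp [Matrix.mulVec, dotProduct, monomialMatrix_apply]

lemma monomialMatrix_mul [NonUnitalNonAssocSemiring R] [Fintype n] (σ τ : Equiv.Perm n)
    (v w : n → R) :
    monomialMatrix σ v * monomialMatrix τ w =
      monomialMatrix (σ.trans τ) fun i => v i * w (σ i) := by
  ext i j
  rw [Matrix.mul_apply, Finset.sum_eq_single (σ i)]
  · rw [monomialMatrix_apply, if_pos rfl, monomialMatrix_apply, mul_ite, mul_zero]
    rfl
  · intro l _ hl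
    simp [monomialMatrix_apply, hl.symm]
  · simp

lemma sum_monomialMatrix [AddCommMonoid R] [Fintype n] (σ : Equiv.Perm n) (w : n → R) :
    ∑ i, ∑ j, monomialMatrix σ w i j = ∑ i, w i := by
  simp [monomialMatrix_apply]

lemma monomialMatrix_mul_conjTranspose [NonAssocSemiring R] [StarRing R] [Fintype n]
    (σ : Equiv.Perm n) {w : n → R} (hw : ∀ i, w i * star (w i) = 1) :
    monomialMatrix σ w * (monomialMatrix σ w)ᴴ = 1 := by
  ext i j
  rcases eq_or_ne i j with rfl | hij
  · simp [Matrix.mul_apply, monomialMatrix_apply, hw]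
  · simp [Matrix.mul_apply, monomialMatrix_apply, hij, hij.symm]

end MonomialMatrix

section BlochShift

/-- The phases picked up by one step to the right in a block of `M` atoms: only the step from the
last atom leaves the block, and it contributes the phase `z`. -/
def blochPhase {R : Type*} [One R] (M : ℕ) (z : R) (i : Fin M) : R :=
  if (i : ℕ) + 1 = M then z else 1

/-- The translation by one atom, acting on displacements that are multiplied by `z` from one block
of `M` atoms to the next. -/
def blochShift {R : Type*} [Zero R] [One R] (M : ℕ) (z : R) : Matrix (Fin M) (Fin M) R :=
  monomialMatrix (finRotate M) (blochPhase M z)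

lemma val_finRotate {M : ℕ} (i : Fin M) :
    (finRotate M i : ℕ) = if (i : ℕ) + 1 = M then 0 else (i : ℕ) + 1 := by
  cases M with
  | zero => exact i.elim0
  | succ m => simp only [coe_finRotate, Fin.ext_iff, Fin.val_last, Nat.succ_inj]

lemma blochShift_mul_conjTranspose {R : Type*} [NonAssocSemiring R] [StarRing R] (M : ℕ) {z : R}
    (hz : z * star z = 1) : blochShift M z * (blochShift M z)ᴴ = 1 := by
  refine monomialMatrix_mul_conjTranspose _ fun i => ?_
  unfold blochPhase
  split_ifs <;> simp [hz]

lemma mulVec_one_sub_blochShift_injective {R : Type*} [CommRing R] [NoZeroDivisors R] (M : ℕ)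
    {z : R} (hz : z ≠ 1) : Function.Injective (1 - blochShift M z).mulVec := by
  refine (injective_iff_map_eq_zero (1 - blochShift M z).mulVecLin).2 fun x hx => ?_
  cases M with
  | zero => exact Subsingleton.elim _ _
  | succ m =>
    have fixed (i : Fin (m + 1)) : x i = blochPhase (m + 1) z i * x (finRotate (m + 1) i) := by
      have := congrFun hx i
      simpa [Matrix.sub_mulVec, blochShift, monomialMatrix_mulVec, sub_eq_zero] using this
    have constant (i : Fin (m + 1)) : x i = x 0 := by
      induction i using Fin.induction with
      | zero => rfl
      | succ i ih => simpa [blochPhase, i.isLt.ne, ih] using (fixed i.castSucc).symm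
    have zero_entry : x 0 = 0 := by
      have := fixed (Fin.last m)
      rw [constant, finRotate_last, blochPhase, if_pos (by simp)] at this
      exact (mul_eq_zero.1 (show (1 - z) * x 0 = 0 by linear_combination this)).resolve_left
        (sub_ne_zero.2 hz.symm)
    ext i
    rw [constant, zero_entry, Pi.zero_apply]

lemma sum_blochShift {R : Type*} [NonAssocRing R] {M : ℕ} (hM : 1 ≤ M) (z : R) :
    ∑ i, ∑ j, blochShift M z i j = M - 1 + z := by
  obtain ⟨m, rfl⟩ := Nat.exists_eq_add_of_le' hM
  rw [blochShift, sum_monomialMatrix, Fin.sum_univ_castSucc]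
  simp [blochPhase, Nat.ne_of_lt]

lemma sum_blochShift_mul_self {R : Type*} [CommRing R] {M : ℕ} (hM : 2 ≤ M) (z : R) :
    ∑ i, ∑ j, (blochShift M z * blochShift M z) i j = M - 2 + 2 * z := by
  obtain ⟨m, rfl⟩ := Nat.exists_eq_add_of_le' hM
  rw [blochShift, monomialMatrix_mul, sum_monomialMatrix, Fin.sum_univ_castSucc,
    Fin.sum_univ_castSucc]
  simp [blochPhase, Nat.ne_of_lt]
  ring

lemma conjTranspose_blochShift_mul {R : Type*} [CommRing R] [StarRing R] (M : ℕ) {z : R}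
    (hz : z * star z = 1) : (blochShift M z)ᴴ * blochShift M z = 1 :=
  mul_eq_one_comm.1 (blochShift_mul_conjTranspose M hz)

lemma conjTranspose_blochShift {R : Type*} [NonAssocSemiring R] [StarRing R] (M : ℕ) (z : R) :
    (blochShift M z)ᴴ = (blochShift M (star z))ᵀ := by
  ext i j
  simp only [blochShift, blochPhase, monomialMatrix_apply, conjTranspose_apply, transpose_apply,
    apply_ite star, star_one, star_zero]

lemma blochShift_apply {R : Type*} [NonAssocSemiring R] {M : ℕ} (z : R) (i j : Fin M) :
    blochShift M z i j =
      (if (j : ℕ) = i + 1 then 1 else 0) + z * if (i : ℕ) + 1 = M ∧ (j : ℕ) = 0 then 1 else 0 := by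
  simp only [blochShift, monomialMatrix_apply, blochPhase, Fin.ext_iff, val_finRotate]
  split_ifs <;> first | (exfalso; omega) | simp

lemma blochShift_mul_self_apply {R : Type*} [NonAssocSemiring R] {M : ℕ} (hM : 2 ≤ M) (z : R)
    (i j : Fin M) :
    (blochShift M z * blochShift M z) i j =
      (if (j : ℕ) = i + 2 then 1 else 0) + z *
        if (i : ℕ) + 2 = M ∧ (j : ℕ) = 0 ∨ (i : ℕ) + 1 = M ∧ (j : ℕ) = 1 then 1 else 0 := by
  simp only [blochShift, monomialMatrix_mul, monomialMatrix_apply, blochPhase, Equiv.trans_apply,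
    Fin.ext_iff, val_finRotate]
  split_ifs <;> first | (exfalso; omega) | simp

end BlochShift

section SpringStiffness

variable {n 𝕜 : Type*} [RCLike 𝕜] [Fintype n] [DecidableEq n]

/-- The stiffness matrix of a chain with spring constants `κ1` between nearest and `κ2` between
next-nearest neighbours, where `U` is the translation by one atom. -/
noncomputable def springStiffness (κ1 κ2 : ℝ) (U : Matrix n n 𝕜) : Matrix n n 𝕜 :=
  κ1 • ((1 - U)ᴴ * (1 - U)) + κ2 • ((1 - U * U)ᴴ * (1 - U * U))

lemma conjTranspose_one_sub_mul_one_sub {U : Matrix n n 𝕜} (hU : Uᴴ * U = 1) :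
    (1 - U)ᴴ * (1 - U) = (2 : ℝ) • (1 : Matrix n n 𝕜) - (U + Uᴴ) := by
  rw [conjTranspose_sub, conjTranspose_one, sub_mul, mul_sub, mul_sub, hU, one_mul, one_mul,
    mul_one]
  module

lemma conjTranspose_mul_self_mul_self {U : Matrix n n 𝕜} (hU : Uᴴ * U = 1) :
    (U * U)ᴴ * (U * U) = 1 := by
  rw [conjTranspose_mul, Matrix.mul_assoc, ← Matrix.mul_assoc Uᴴ U U, hU, Matrix.one_mul, hU]

lemma springStiffness_eq (κ1 κ2 : ℝ) {U : Matrix n n 𝕜} (hU : Uᴴ * U = 1) :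
    springStiffness κ1 κ2 U =
      (2 * (κ1 + κ2)) • (1 : Matrix n n 𝕜) - κ1 • (U + Uᴴ) - κ2 • (U * U + (U * U)ᴴ) := by
  rw [springStiffness, conjTranspose_one_sub_mul_one_sub hU,
    conjTranspose_one_sub_mul_one_sub (conjTranspose_mul_self_mul_self hU)]
  module

/- For `U = exp (iθ)` this is the identity `2 - 2 cos 2θ = 4 (2 - 2 cos θ) - (2 - 2 cos θ) ^ 2`. -/
lemma conjTranspose_one_sub_mul_self_mul {U : Matrix n n 𝕜} (hU : Uᴴ * U = 1) :
    (1 - U * U)ᴴ * (1 - U * U) =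
      (4 : ℝ) • ((1 - U)ᴴ * (1 - U)) - ((1 - U)ᴴ * (1 - U))ᴴ * ((1 - U)ᴴ * (1 - U)) := by
  have hsq : (U + Uᴴ) * (U + Uᴴ) = U * U + (U * U)ᴴ + (2 : ℝ) • (1 : Matrix n n 𝕜) := by
    rw [add_mul, mul_add, mul_add, hU, mul_eq_one_comm.1 hU, conjTranspose_mul]
    module
  rw [(isHermitian_conjTranspose_mul_self (1 - U)).eq, conjTranspose_one_sub_mul_one_sub hU,
    conjTranspose_one_sub_mul_one_sub (conjTranspose_mul_self_mul_self hU), sub_mul, mul_sub,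
    mul_sub, hsq]
  simp only [smul_mul_assoc, mul_smul_comm, one_mul, mul_one]
  module

lemma posDef_springStiffness {κ1 κ2 : ℝ} (h1 : 0 < κ1) (h2 : 0 ≤ κ1 + 4 * κ2) {U : Matrix n n 𝕜}
    (hU : Uᴴ * U = 1) (hinj : Function.Injective (1 - U).mulVec) :
    (springStiffness κ1 κ2 U).PosDef := by
  have hL : ((1 - U)ᴴ * (1 - U)).PosDef := .conjTranspose_mul_self _ hinj
  rcases le_or_gt 0 κ2 with hκ | hκ
  · exact (hL.smul h1).add_posSemidef ((posSemidef_conjTranspose_mul_self _).smul hκ)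
  · have hLL := PosDef.conjTranspose_mul_self _ (mulVec_injective_of_isUnit hL.isUnit)
    have : springStiffness κ1 κ2 U = (κ1 + 4 * κ2) • ((1 - U)ᴴ * (1 - U)) +
        (-κ2) • (((1 - U)ᴴ * (1 - U))ᴴ * ((1 - U)ᴴ * (1 - U))) := by
      rw [springStiffness, conjTranspose_one_sub_mul_self_mul hU]
      module
    rw [this]
    exact .posSemidef_add (hL.posSemidef.smul h2) (hLL.smul (neg_pos.2 hκ))

end SpringStiffness

section Ahat

lemma exp_mul_I_mul_star (ξ : ℝ) : Complex.exp (ξ * I) * star (Complex.exp (ξ * I)) = 1 := by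
  simp [← Complex.exp_conj, ← Complex.exp_add]

lemma A0_apply {M : ℕ} (κ1 κ2 : ℝ) (i j : Fin M) :
    A0 M κ1 κ2 i j = (2 * (κ1 + κ2) * if i = j then 1 else 0)
      - κ1 * ((if (j : ℕ) = i + 1 then 1 else 0) + if (i : ℕ) = j + 1 then 1 else 0)
      - κ2 * ((if (j : ℕ) = i + 2 then 1 else 0) + if (i : ℕ) = j + 2 then 1 else 0) := by
  have adjacent : |(i : ℤ) - (j : ℤ)| = 1 ↔ (j : ℕ) = i + 1 ∨ (i : ℕ) = j + 1 := by
    rw [abs_eq zero_le_one]; omega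
  have next_adjacent : |(i : ℤ) - (j : ℤ)| = 2 ↔ (j : ℕ) = i + 2 ∨ (i : ℕ) = j + 2 := by
    rw [abs_eq zero_le_two]; omega
  simp only [A0, adjacent, next_adjacent, Nat.cast_inj, Fin.ext_iff]
  split_ifs <;> first | (exfalso; omega) | ring

lemma A1_apply {M : ℕ} (hM : 2 ≤ M) (κ1 κ2 : ℝ) (i j : Fin M) :
    A1 M κ1 κ2 i j = (-κ1 * if (j : ℕ) + 1 = M ∧ (i : ℕ) = 0 then 1 else 0)
      - κ2 * if (j : ℕ) + 2 = M ∧ (i : ℕ) = 0 ∨ (j : ℕ) + 1 = M ∧ (i : ℕ) = 1 then 1 else 0 := by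
  unfold A1
  split_ifs <;> first | (exfalso; omega) | ring

/- Keeping the phases of `A1` and `A1ᵀ` independent covers both `Ahat` (at `exp (∓iξ)`) and `A0`
(at `0`). -/
lemma A0_add_smul_A1_add_smul_transpose {M : ℕ} (hM : 2 ≤ M) (κ1 κ2 : ℝ) (w z : ℂ) :
    A0 M κ1 κ2 + w • A1 M κ1 κ2 + z • (A1 M κ1 κ2)ᵀ =
      (2 * (κ1 + κ2)) • (1 : Matrix (Fin M) (Fin M) ℂ)
        - κ1 • (blochShift M z + (blochShift M w)ᵀ)
        - κ2 • (blochShift M z * blochShift M z + (blochShift M w * blochShift M w)ᵀ) := by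
  ext i j
  simp only [Matrix.add_apply, Matrix.sub_apply, Matrix.smul_apply, Matrix.transpose_apply,
    A0_apply, A1_apply hM, Matrix.one_apply, blochShift_apply, blochShift_mul_self_apply hM,
    smul_eq_mul, Complex.real_smul]
  push_cast
  ring

lemma Ahat_eq_springStiffness {M : ℕ} (hM : 2 ≤ M) (κ1 κ2 ξ : ℝ) :
    Ahat M κ1 κ2 ξ = springStiffness κ1 κ2 (blochShift M (Complex.exp (ξ * I))) := by
  have hexp : Complex.exp (-ξ * I) = star (Complex.exp (ξ * I)) := by
    simp [← Complex.exp_conj]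
  rw [Ahat, A0_add_smul_A1_add_smul_transpose hM, hexp,
    springStiffness_eq _ _ (conjTranspose_blochShift_mul M (exp_mul_I_mul_star ξ)),
    conjTranspose_mul, conjTranspose_blochShift, transpose_mul]

lemma posDef_Ahat {M : ℕ} (hM : 2 ≤ M) {κ1 κ2 ξ : ℝ} (h1 : 0 < κ1) (h2 : 0 ≤ κ1 + 4 * κ2)
    (hξ : ξ ∈ Set.Ioo 0 (2 * π)) : (Ahat M κ1 κ2 ξ).PosDef := by
  have hcos : Real.cos ξ ≠ 1 := fun h =>
    hξ.1.ne' ((Real.cos_eq_one_iff_of_lt_of_lt (by linarith [hξ.1, Real.pi_pos]) hξ.2).1 h)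
  have hexp : Complex.exp (ξ * I) ≠ 1 := fun h =>
    hcos (by rw [← Complex.exp_ofReal_mul_I_re, h, Complex.one_re])
  rw [Ahat_eq_springStiffness hM]
  exact posDef_springStiffness h1 h2 (conjTranspose_blochShift_mul M (exp_mul_I_mul_star ξ))
    (mulVec_one_sub_blochShift_injective M hexp)

lemma continuous_Ahat (M : ℕ) (κ1 κ2 : ℝ) : Continuous (Ahat M κ1 κ2) := by
  unfold Ahat
  fun_prop

/- The phases `exp (±iξ)` average to zero. -/
lemma integral_mul_Ahat_mul {k l : Type*} (M : ℕ) (κ1 κ2 : ℝ) (B : Matrix k (Fin M) ℂ)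
    (C : Matrix (Fin M) l ℂ) (i : k) (j : l) :
    ∫ ξ in (0 : ℝ)..2 * π, (B * Ahat M κ1 κ2 ξ * C) i j =
      2 * π * (B * A0 M κ1 κ2 * C) i j := by
  have hneg : ∫ ξ in (0 : ℝ)..2 * π, Complex.exp (-ξ * I) = 0 := by
    simp_rw [neg_mul_comm, mul_comm _ (-I)]
    rw [integral_exp_mul_complex (neg_ne_zero.2 I_ne_zero)]
    push_cast
    simp [neg_mul, mul_comm I, Complex.exp_neg, Complex.exp_two_pi_mul_I]
  have hpos : ∫ ξ in (0 : ℝ)..2 * π, Complex.exp (ξ * I) = 0 := by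
    simp_rw [mul_comm _ I]
    rw [integral_exp_mul_complex I_ne_zero]
    push_cast
    simp [mul_comm I, Complex.exp_two_pi_mul_I]
  simp only [Ahat, Matrix.mul_add, Matrix.add_mul, Matrix.mul_smul, Matrix.smul_mul,
    Matrix.add_apply, Matrix.smul_apply, smul_eq_mul]
  rw [intervalIntegral.integral_add (Continuous.intervalIntegrable (by fun_prop) _ _)
      (Continuous.intervalIntegrable (by fun_prop) _ _),
    intervalIntegral.integral_add (Continuous.intervalIntegrable (by fun_prop) _ _)
      (Continuous.intervalIntegrable (by fun_prop) _ _),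
    intervalIntegral.integral_mul_const, intervalIntegral.integral_mul_const, hneg, hpos]
  simp

lemma sum_A0 {M : ℕ} (hM : 2 ≤ M) (κ1 κ2 : ℝ) :
    ∑ i, ∑ j, A0 M κ1 κ2 i j = 2 * κ1 + 4 * κ2 := by
  have hA0 := A0_add_smul_A1_add_smul_transpose hM κ1 κ2 0 0
  have transposed (B : Matrix (Fin M) (Fin M) ℂ) : ∑ i, ∑ j, B j i = ∑ i, ∑ j, B i j :=
    Finset.sum_comm
  rw [zero_smul, zero_smul, add_zero, add_zero] at hA0
  simp only [hA0, Matrix.add_apply, Matrix.sub_apply, Matrix.smul_apply, Matrix.transpose_apply,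
    Finset.sum_sub_distrib, Finset.sum_add_distrib, ← Finset.smul_sum]
  rw [transposed, transposed, sum_blochShift (one_le_two.trans hM), sum_blochShift_mul_self hM]
  simp [Matrix.one_apply]
  ring

lemma q1col_conjTranspose_mul_A0_mul_q1col {M : ℕ} (hM : 2 ≤ M) (κ1 κ2 : ℝ) :
    ((q1col M)ᴴ * A0 M κ1 κ2 * q1col M) 0 0 = ((2 * κ1 + 4 * κ2) / M : ℝ) := by
  have hnorm : ((1 / √M : ℝ) : ℂ) * ((1 / √M : ℝ) : ℂ) = 1 / M := by
    rw [← Complex.ofReal_mul, div_mul_div_comm, Real.mul_self_sqrt M.cast_nonneg]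
    simp
  simp only [Matrix.mul_apply, Matrix.conjTranspose_apply, q1col, Complex.star_def,
    Complex.conj_ofReal, ← Finset.mul_sum, ← Finset.sum_mul]
  rw [mul_right_comm, hnorm, Finset.sum_comm, sum_A0 hM]
  push_cast
  ring

end Ahat

section SchurCorrection

variable {m n k 𝕜 : Type*} [RCLike 𝕜] [Fintype m] [Fintype n] [DecidableEq n]

/-- The part of the quadratic form of `A` on the columns of `q` that is removed when the range of
`Q` is eliminated; for `A = Ahat M κ1 κ2 ξ` it is the integrand of the memory kernel. -/
noncomputable def schurCorrection (A : Matrix m m 𝕜) (q : Matrix m k 𝕜) (Q : Matrix m n 𝕜) :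
    Matrix k k 𝕜 :=
  qᴴ * A * Q * (Qᴴ * A * Q)⁻¹ * (Qᴴ * A * q)

variable [Finite k]

lemma posSemidef_schurCorrection {A : Matrix m m 𝕜} (hA : A.PosSemidef) (q : Matrix m k 𝕜)
    (Q : Matrix m n 𝕜) : (schurCorrection A q Q).PosSemidef := by
  have := (hA.conjTranspose_mul_mul_same Q).inv.conjTranspose_mul_mul_same (Qᴴ * A * q)
  simpa only [schurCorrection, conjTranspose_mul, conjTranspose_conjTranspose, hA.1.eq,
    Matrix.mul_assoc] using this

lemma posSemidef_sub_schurCorrection {A : Matrix m m 𝕜} (hA : A.PosSemidef)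
    (q : Matrix m k 𝕜) {Q : Matrix m n 𝕜} (hQ : (Qᴴ * A * Q).PosDef) :
    (qᴴ * A * q - schurCorrection A q Q).PosSemidef := by
  have hblocks := hA.conjTranspose_mul_mul_same (fromCols q Q)
  have hB : Qᴴ * A * q = (qᴴ * A * Q)ᴴ := by
    simp only [conjTranspose_mul, conjTranspose_conjTranspose, hA.1.eq, Matrix.mul_assoc]
  rw [conjTranspose_fromCols_eq_fromRows_conjTranspose, fromRows_mul, fromRows_mul_fromCols,
    hB] at hblocks
  have := hQ.isUnit.invertible
  rw [schurCorrection, hB]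
  exact (hQ.fromBlocks₂₂ _ _).1 hblocks

end SchurCorrection

lemma average_schurCorrection_Ahat_mem_Icc {n k : Type*} [Fintype n] [DecidableEq n] [Finite k]
    {M : ℕ} (hM : 2 ≤ M) {κ1 κ2 : ℝ} (h1 : 0 < κ1) (h2 : 0 ≤ κ1 + 4 * κ2)
    (q : Matrix (Fin M) k ℂ) {Q : Matrix (Fin M) n ℂ} (hQ : Function.Injective Q.mulVec) (i : k) :
    (1 / (2 * π) : ℂ) * ∫ ξ in (0 : ℝ)..2 * π, schurCorrection (Ahat M κ1 κ2 ξ) q Q i i ∈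
      Set.Icc 0 ((qᴴ * A0 M κ1 κ2 * q) i i) := by
  have hmem : ∀ ξ ∈ Set.Ioo 0 (2 * π), schurCorrection (Ahat M κ1 κ2 ξ) q Q i i ∈
      Set.Icc 0 ((qᴴ * Ahat M κ1 κ2 ξ * q) i i) := fun ξ hξ => by
    have hA := posDef_Ahat hM h1 h2 hξ
    have hsub := posSemidef_sub_schurCorrection hA.posSemidef q (hA.conjTranspose_mul_mul_same hQ)
    exact ⟨(posSemidef_schurCorrection hA.posSemidef q Q).diag_nonneg,
      sub_nonneg.1 hsub.diag_nonneg⟩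
  have hmem_ae := MeasureTheory.ae_restrict_of_forall_mem (μ := MeasureTheory.volume)
    measurableSet_Ioo hmem
  have hcont : Continuous fun ξ => (qᴴ * Ahat M κ1 κ2 ξ * q) i i := by
    have := continuous_Ahat M κ1 κ2
    fun_prop
  have hpos : (0 : ℂ) ≤ 1 / (2 * π) := by
    exact_mod_cast (by positivity : (0 : ℝ) ≤ 1 / (2 * π))
  have haverage : (qᴴ * A0 M κ1 κ2 * q) i i =
      1 / (2 * π) * ∫ ξ in (0 : ℝ)..2 * π, (qᴴ * Ahat M κ1 κ2 ξ * q) i i := by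
    rw [integral_mul_Ahat_mul]
    field_simp
  rw [haverage]
  simp only [intervalIntegral.integral_of_le Real.two_pi_pos.le,
    MeasureTheory.integral_Ioc_eq_integral_Ioo]
  have hnonneg := hmem_ae.mono fun ξ h => h.1
  exact ⟨mul_nonneg hpos (MeasureTheory.integral_nonneg_of_ae hnonneg),
    mul_le_mul_of_nonneg_left (MeasureTheory.integral_mono_of_nonneg hnonneg
      (hcont.integrableOn_Icc.mono_set Set.Ioo_subset_Icc_self) (hmem_ae.mono fun ξ h => h.2)) hpos⟩

theorem kernel_diagonal_bound_piecewise_constant_general {n : Type*} [Fintype n] [DecidableEq n]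
    {M : ℕ} (hM : 2 ≤ M) {κ1 κ2 : ℝ} (h1 : 0 < κ1) (h2 : 0 ≤ κ1 + 4 * κ2)
    {Q : Matrix (Fin M) n ℂ} (hQ : Function.Injective Q.mulVec) {Θ00 : ℂ}
    (hΘ : Θ00 = (1 / (2 * π) : ℂ) *
      ∫ ξ in (0 : ℝ)..2 * π, schurCorrection (Ahat M κ1 κ2 ξ) (q1col M) Q 0 0) :
    Θ00.im = 0 ∧ 0 ≤ Θ00.re ∧ Θ00.re ≤ (2 * κ1 + 4 * κ2) / M := by
  have := average_schurCorrection_Ahat_mem_Icc hM h1 h2 (q1col M) hQ 0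
  rw [← hΘ, q1col_conjTranspose_mul_A0_mul_q1col hM] at this
  obtain ⟨hnonneg, hle⟩ := this
  rw [Complex.le_def] at hnonneg hle
  exact ⟨hnonneg.2.symm, hnonneg.1, by simpa using hle.1⟩

lemma map_mulVec_injective_of_mul_eq_one {m n R S : Type*} [Fintype m] [Fintype n]
    [DecidableEq n] [NonAssocSemiring R] [Semiring S] (f : R →+* S) {P : Matrix n m R}
    {Q : Matrix m n R} (h : P * Q = 1) : Function.Injective (Q.map f).mulVec := by
  have hmap : P.map f * Q.map f = 1 := by
    rw [← Matrix.map_mul, h, Matrix.map_one _ (map_zero f) (map_one f)]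
  exact fun x y hxy => by simpa [hmap] using congrArg (P.map f *ᵥ ·) hxy

theorem kernel_diagonal_bound_piecewise_constant (M : ℕ) (hM : 5 ≤ M) (κ1 κ2 : ℝ)
    (h1 : 0 < κ1) (h2 : 0 < κ1 + 4 * κ2)
    (Q2 : Matrix (Fin M) (Fin (M - 1)) ℝ)
    (horth : Q2ᵀ * Q2 = 1) (hcompl : Q2 * Q2ᵀ = 1 - Matrix.vecMulVec (q1r M) (q1r M))
    (Θ00 : ℂ)
    (hΘ : Θ00 = (1 / (2 * Real.pi) : ℂ) * ∫ ξ in (0 : ℝ)..(2 * Real.pi),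
        ((q1col M)ᵀ * Ahat M κ1 κ2 ξ * Q2.map Complex.ofReal *
            ((Q2.map Complex.ofReal)ᵀ * Ahat M κ1 κ2 ξ * Q2.map Complex.ofReal)⁻¹ *
              ((Q2.map Complex.ofReal)ᵀ * Ahat M κ1 κ2 ξ * q1col M)) 0 0) :
    Θ00.im = 0 ∧ 0 ≤ Θ00.re ∧ Θ00.re ≤ (2 * κ1 + 4 * κ2) / M := by
  have hconj : (q1col M)ᴴ = (q1col M)ᵀ := by ext; simp [q1col]
  have hQ2 : (Q2.map Complex.ofReal)ᴴ = (Q2.map Complex.ofReal)ᵀ := by ext; simp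
  have hinj : Function.Injective (Q2.map Complex.ofReal).mulVec :=
    map_mulVec_injective_of_mul_eq_one Complex.ofRealHom horth
  exact kernel_diagonal_bound_piecewise_constant_general (by lia) h1 h2.le hinj
    (by simpa only [schurCorrection, hconj, hQ2] using hΘ)
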